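/- Let Γ(s) and G be as in the context. For any pair (p, q) of complex polynomials of degree at most a, the set { s ∈ ℂ : (p(s), q(s)) ∈ Γ(s) } is either equal to all of ℂ — which happens if and only if (p, q) ∈ G — or it is countable. -/

import Mathlib

open Polynomial

/-- The fiberwise lattice `Γ(s) ⊆ ℂ²`, generated by the values at `s` of the four sections
`(σ₀, σ₁)`, `(i·σ₀, −i·σ₁)`, `(−σ₁, σ₀)`, `(−i·σ₁, −i·σ₀)` of the Blanchard construction. -/
noncomputable def Gam (σ₀ σ₁ : Polynomial ℂ) (s : ℂ) : AddSubgroup (ℂ × ℂ) :=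
  AddSubgroup.closure
    { (σ₀.eval s, σ₁.eval s),
      (Complex.I * σ₀.eval s, -(Complex.I * σ₁.eval s)),
      (-(σ₁.eval s), σ₀.eval s),
      (-(Complex.I * σ₁.eval s), -(Complex.I * σ₀.eval s)) }

/-- Evaluation of a pair of polynomials at `s`, as an additive group homomorphism. -/
noncomputable def evalPair (s : ℂ) : (Polynomial ℂ × Polynomial ℂ) →+ ℂ × ℂ :=
  AddMonoidHom.prodMap (Polynomial.evalRingHom s).toAddMonoidHom
    (Polynomial.evalRingHom s).toAddMonoidHom

/-- The group `Σ` of pairs `(p, q)` of polynomials of degree at most `a` whose value at each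
`tᵢ` lies in the lattice `Γ(tᵢ)`. -/
noncomputable def Sig (a : ℕ) (t : Fin (a + 1) → ℂ) (σ₀ σ₁ : Polynomial ℂ) :
    AddSubgroup (Polynomial ℂ × Polynomial ℂ) :=
  AddSubgroup.prod (Polynomial.degreeLE ℂ (a : WithBot ℕ)).toAddSubgroup
      (Polynomial.degreeLE ℂ (a : WithBot ℕ)).toAddSubgroup ⊓
    ⨅ i : Fin (a + 1), AddSubgroup.comap (evalPair (t i)) (Gam σ₀ σ₁ (t i))

/-- The subgroup `G` generated by the four pairs
`(σ₀, σ₁)`, `(i·σ₀, −i·σ₁)`, `(−σ₁, σ₀)`, `(−i·σ₁, −i·σ₀)`. -/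
noncomputable def Gsub (σ₀ σ₁ : Polynomial ℂ) : AddSubgroup (Polynomial ℂ × Polynomial ℂ) :=
  AddSubgroup.closure
    { (σ₀, σ₁),
      (Polynomial.C Complex.I * σ₀, -(Polynomial.C Complex.I * σ₁)),
      (-σ₁, σ₀),
      (-(Polynomial.C Complex.I * σ₁), -(Polynomial.C Complex.I * σ₀)) }

/-!
Evaluation at `s` maps `G` onto `Γ(s)`, so the set of `s` at which the value of `(p, q)` lies in
`Γ(s)` is the union, over the countably many `g ∈ G`, of the sets where `(p, q)` and `g` agree.
Each of these sets is finite unless `(p, q) = g`.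
-/

theorem countable_addSubgroup_closure {A : Type*} [AddGroup A] {S : Set A} (hS : S.Countable) :
    (AddSubgroup.closure S : Set A).Countable := by
  have : Countable S := hS
  have : Countable (FreeAddGroup S) := Quot.mk_surjective.countable
  rw [FreeAddGroup.closure_eq_range, AddMonoidHom.coe_range]
  exact Set.countable_range _

section Agreement

variable {R : Type*} [CommRing R] [IsDomain R]

theorem finite_setOfPred_eval_eq_of_ne {p q : R[X]} (hpq : p ≠ q) :
    {s | p.eval s = q.eval s}.Finite :=
  Set.not_infinite.mp (mt (eq_of_infinite_eval_eq p q) hpq)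

theorem finite_setOfPred_prodMap_eval_eq_of_ne {f g : R[X] × R[X]} (hfg : f ≠ g) :
    {s | Prod.map (eval s) (eval s) f = Prod.map (eval s) (eval s) g}.Finite := by
  obtain hfst | hsnd : f.1 ≠ g.1 ∨ f.2 ≠ g.2 := by
    rwa [Ne, Prod.ext_iff, not_and_or] at hfg
  · exact (finite_setOfPred_eval_eq_of_ne hfst).subset fun s hs ↦ congrArg Prod.fst hs
  · exact (finite_setOfPred_eval_eq_of_ne hsnd).subset fun s hs ↦ congrArg Prod.snd hs

theorem countable_setOfPred_prodMap_eval_mem_image_of_notMem {S : Set (R[X] × R[X])}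
    (hS : S.Countable) {f : R[X] × R[X]} (hf : f ∉ S) :
    {s | Prod.map (eval s) (eval s) f ∈ Prod.map (eval s) (eval s) '' S}.Countable := by
  have agreement_countable : ∀ g ∈ S,
      {s | Prod.map (eval s) (eval s) f = Prod.map (eval s) (eval s) g}.Countable :=
    fun g hg ↦ (finite_setOfPred_prodMap_eval_eq_of_ne (ne_of_mem_of_not_mem hg hf).symm).countable
  refine (hS.biUnion agreement_countable).mono ?_
  rintro s ⟨g, hg, hgf⟩
  exact Set.mem_biUnion hg hgf.symm

end Agreement

section Lattice

variable (σ₀ σ₁ : ℂ[X])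

theorem gam_eq_map_gsub (s : ℂ) : Gam σ₀ σ₁ s = (Gsub σ₀ σ₁).map (evalPair s) := by
  simp [Gam, Gsub, AddMonoidHom.map_closure, Set.image_insert_eq, evalPair]

theorem countable_gsub : (Gsub σ₀ σ₁ : Set (ℂ[X] × ℂ[X])).Countable :=
  countable_addSubgroup_closure (Set.toFinite _).countable

variable {σ₀ σ₁} {p q : ℂ[X]}

theorem setOfPred_eval_mem_gam_eq_univ_of_mem_gsub (h : (p, q) ∈ Gsub σ₀ σ₁) :
    {s : ℂ | (p.eval s, q.eval s) ∈ Gam σ₀ σ₁ s} = Set.univ := by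
  refine Set.eq_univ_of_forall fun s ↦ ?_
  rw [Set.mem_ofPred_eq, gam_eq_map_gsub]
  exact AddSubgroup.mem_map_of_mem (evalPair s) h

theorem countable_setOfPred_eval_mem_gam_of_notMem_gsub (h : (p, q) ∉ Gsub σ₀ σ₁) :
    {s : ℂ | (p.eval s, q.eval s) ∈ Gam σ₀ σ₁ s}.Countable := by
  simp only [gam_eq_map_gsub]
  exact countable_setOfPred_prodMap_eval_mem_image_of_notMem (countable_gsub σ₀ σ₁) h

end Lattice

/-- For any pair `(p, q)` of polynomials of degree at most `a`, the set
`{ s ∈ ℂ : (p(s), q(s)) ∈ Γ(s) }` is either all of `ℂ` — which happens exactly when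
`(p, q) ∈ G` — or countable. -/
theorem lattice_value_set_univ_or_countable
    (a : ℕ) (ha : 1 ≤ a) (σ₀ σ₁ : Polynomial ℂ)
    (h0 : σ₀.degree ≤ (a : WithBot ℕ)) (h1 : σ₁.degree ≤ (a : WithBot ℕ))
    (p q : Polynomial ℂ) (hp : p.degree ≤ (a : WithBot ℕ)) (hq : q.degree ≤ (a : WithBot ℕ)) :
    ({s : ℂ | (p.eval s, q.eval s) ∈ Gam σ₀ σ₁ s} = Set.univ ↔ (p, q) ∈ Gsub σ₀ σ₁) ∧
      ({s : ℂ | (p.eval s, q.eval s) ∈ Gam σ₀ σ₁ s} = Set.univ ∨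
        Set.Countable {s : ℂ | (p.eval s, q.eval s) ∈ Gam σ₀ σ₁ s}) := by
  by_cases hG : (p, q) ∈ Gsub σ₀ σ₁
  · have hvalues := setOfPred_eval_mem_gam_eq_univ_of_mem_gsub hG
    exact ⟨iff_of_true hvalues hG, Or.inl hvalues⟩
  · have hvalues := countable_setOfPred_eval_mem_gam_of_notMem_gsub hG
    have hne_univ : {s : ℂ | (p.eval s, q.eval s) ∈ Gam σ₀ σ₁ s} ≠ Set.univ :=
      fun huniv ↦ not_countable_complex (huniv ▸ hvalues)
    exact ⟨iff_of_false hne_univ hG, Or.inr hvalues⟩
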